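/- arXiv:2204.12132 — 2 statements merged into one kernel-verified Lean document; each statement's English description precedes it below -/
import Mathlib

section
/- Let $R$ be a locally quasi-unmixed Noetherian ring. Then $\widetilde{R}\subseteq\overline{R}$, where $\overline{R}$ is the integral closure of $R$ in its total quotient ring. -/
/-- The height of an ideal. -/
noncomputable def idealHt {R : Type*} [CommRing R] (I : Ideal R) : ℕ∞ :=
  ⨅ p ∈ {p : PrimeSpectrum R | I ≤ p.asIdeal}, Order.height p

/-- A Noetherian local ring is quasi-unmixed if all minimal primes of its
`𝔪`-adic completion have the same codimension. -/
def QuasiUnmixed (A : Type*) [CommRing A] [IsLocalRing A] : Prop :=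
  ∀ q ∈ minimalPrimes (AdicCompletion (IsLocalRing.maximalIdeal A) A),
    ringKrullDim (AdicCompletion (IsLocalRing.maximalIdeal A) A ⧸ q) =
      ringKrullDim (AdicCompletion (IsLocalRing.maximalIdeal A) A)

/-- A ring is locally quasi-unmixed if all its localizations at primes are
quasi-unmixed. -/
def LocallyQuasiUnmixed (R : Type*) [CommRing R] : Prop :=
  ∀ (p : Ideal R) [p.IsPrime], QuasiUnmixed (Localization.AtPrime p)

/-!
Localize the obstruction to integrality: there are a prime `p ⊇ I` and an element `g` such that `p`
consists of the `x` for which `x • g` is integral. The completion `B` of `R_p` is flat over `R`, so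
it suffices that `1 ⊗ g` is integral over `B`, which may be tested in residue fields at minimal
primes. These lie over minimal primes of `B`, whose quotients have dimension at least two.

So let `D` be complete local with maximal ideal `m`, let `D → K` be a map to a field whose image has
dimension at least two, and let `f ∈ K` be such that `x f` is integral for all `x ∈ m`. If `f` is
not integral, then `f⁻¹` is not a unit of `E = D[f⁻¹]`. A minimal prime `P` over `f⁻¹` has height at
most one, and it contains `mE` since `x = (x f) f⁻¹`. If all relations of `f⁻¹` have coefficients in
`m`, then `mE` is a prime strictly between `0` and `P`. Otherwise Weierstrass preparation makes
`f⁻¹` a root of a distinguished polynomial, so `E` is integral over `D` with `P` as its only maximal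
ideal, and lying over again provides a prime strictly between `0` and `P`.
-/

section

open IsLocalRing Polynomial TensorProduct

theorem eq_bot_of_lt_of_height_le_one {E : Type*} [CommRing E] [IsDomain E] {P Q : Ideal E}
    [P.IsPrime] [Q.IsPrime] (hP : P.height ≤ 1) (h : Q < P) : Q = ⊥ := by
  have hQ := Ideal.height_le_iff (p := P) (n := 1) |>.mp (by simpa using hP) Q ‹_› h
  exact Ideal.height_eq_zero_iff_eq_bot.mp (by simpa using hQ)

theorem exists_isPrime_lt_lt_maximalIdeal {B : Type*} [CommRing B] [IsLocalRing B] {q : Ideal B}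
    (hq : 2 ≤ ringKrullDim (B ⧸ q)) : ∃ p : Ideal B, p.IsPrime ∧ q < p ∧ p < maximalIdeal B := by
  rw [ringKrullDim_quotient] at hq
  obtain ⟨l, hl⟩ := Order.le_krullDim_iff (n := 2) |>.mp hq
  have h01 : l ⟨0, by lia⟩ < l ⟨1, by lia⟩ := l.strictMono Nat.zero_lt_one
  have h12 : l ⟨1, by lia⟩ < l ⟨2, by lia⟩ := l.strictMono Nat.one_lt_two
  exact ⟨_, (l ⟨1, by lia⟩).1.2, (l ⟨0, by lia⟩).2.trans_lt h01,
    lt_of_lt_of_le h12 (le_maximalIdeal_of_isPrime _)⟩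

theorem exists_isDistinguishedAt_mul_of_map_residue_ne_zero {D : Type*} [CommRing D]
    [IsLocalRing D] [IsAdicComplete (maximalIdeal D) D] {F : D[X]}
    (hF : F.map (residue D) ≠ 0) :
    ∃ H U : D[X], F = H * U ∧ H.IsDistinguishedAt (maximalIdeal D) ∧ IsUnit (U.coeff 0) := by
  have hF' : (F : PowerSeries D).map (residue D) ≠ 0 := by
    contrapose! hF
    ext n
    simpa using congr(PowerSeries.coeff n $hF)
  obtain ⟨H, h, hH, hu, hmul⟩ := PowerSeries.exists_isWeierstrassFactorization hF'
  have hmon := hH.monic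
  have hdeg : ((F %ₘ H).degree : WithBot ℕ) <
      (((H : PowerSeries D).map (Ideal.Quotient.mk (maximalIdeal D))).order.toNat : ℕ) := by
    have : H.natDegree = _ := congr(ENat.toNat $(hH.coe_natDegree_eq_order_map H 1
      (by simp) (by simp)))
    rw [← this, ← degree_eq_natDegree hmon.ne_zero]
    exact degree_modByMonic_lt _ hmon
  -- Uniqueness of Weierstrass division identifies the power series cofactor `h` with `F /ₘ H`.
  obtain ⟨hq, -⟩ := PowerSeries.IsWeierstrassDivisorAt.eq_of_mul_add_eq_mul_add
    hH.isWeierstrassDivisorAt' (q := h) (q' := ((F /ₘ H : D[X]) : PowerSeries D))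
    (r := 0) (r' := F %ₘ H) (by simp) hdeg (by
      rw [← coe_mul, ← coe_add, add_comm (H * _), modByMonic_add_div, hmul]; simp)
  refine ⟨H, F /ₘ H, ?_, hH, ?_⟩
  · rw [hq] at hmul
    exact_mod_cast hmul
  · rw [hq] at hu
    simpa using PowerSeries.isUnit_constantCoeff _ hu

section Monogenic

variable {D E : Type*} [CommRing D] [CommRing E] [Algebra D E] {g : E}

theorem aeval_mem_iff_algebraMap_coeff_zero_mem {I : Ideal E} (hg : g ∈ I) (F : D[X]) :
    aeval g F ∈ I ↔ algebraMap D E (F.coeff 0) ∈ I := by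
  nth_rw 1 [← F.divX_mul_X_add]
  rw [map_add, map_mul, aeval_X, aeval_C, I.add_mem_iff_right (I.mul_mem_left _ hg)]

theorem eq_of_comap_eq_of_surjective_aeval (hsurj : Function.Surjective (aeval (R := D) g))
    {I J : Ideal E} (hI : g ∈ I) (hJ : g ∈ J)
    (h : I.comap (algebraMap D E) = J.comap (algebraMap D E)) : I = J := by
  ext e
  obtain ⟨F, rfl⟩ := hsurj e
  rw [aeval_mem_iff_algebraMap_coeff_zero_mem hI, aeval_mem_iff_algebraMap_coeff_zero_mem hJ,
    ← Ideal.mem_comap, h, Ideal.mem_comap]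

variable [IsDomain E] {P : Ideal E} [P.IsPrime]

theorem not_ker_aeval_le_map_C (hsurj : Function.Surjective (aeval (R := D) g))
    (hgP : g ∈ P) (hht : P.height ≤ 1) {p : Ideal D} [p.IsPrime]
    (hp : ¬ p ≤ RingHom.ker (algebraMap D E)) (hpP : p.map (algebraMap D E) ≤ P) :
    ¬ RingHom.ker (aeval (R := D) g) ≤ p.map (C : D →+* D[X]) := by
  intro hker
  have hmap : (p.map (C : D →+* D[X])).map (aeval (R := D) g) = p.map (algebraMap D E) := by
    rw [← Ideal.map_coe (aeval (R := D) g), Ideal.map_map]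
    congr
    ext
    simp
  have hprime : (p.map (algebraMap D E)).IsPrime := by
    have : (p.map (C : D →+* D[X])).IsPrime := Ideal.isPrime_map_C_of_isPrime
    rw [← hmap]
    exact Ideal.map_isPrime_of_surjective hsurj hker
  have hg : g ∉ p.map (algebraMap D E) := by
    rw [← hmap, Ideal.mem_map_iff_of_surjective _ hsurj]
    rintro ⟨F, hF, hFg⟩
    have hX : (X : D[X]) ∈ p.map (C : D →+* D[X]) := by
      rw [← sub_add_cancel X F]
      refine add_mem (hker ?_) hF
      rw [RingHom.mem_ker, map_sub, aeval_X, hFg, sub_self]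
    refine ‹p.IsPrime›.ne_top (p.eq_top_iff_one.mpr ?_)
    simpa using Ideal.mem_map_C_iff.mp hX 1
  have hbot := eq_bot_of_lt_of_height_le_one hht (hpP.lt_of_ne fun h => hg (h ▸ hgP))
  exact hp (by rwa [← Ideal.map_eq_bot_iff_le_ker])

theorem exists_isDistinguishedAt_aeval_eq_zero [IsLocalRing D] [IsAdicComplete (maximalIdeal D) D]
    (hgP : g ∈ P)
    (hker : ¬ RingHom.ker (aeval (R := D) g) ≤ (maximalIdeal D).map (C : D →+* D[X])) :
    ∃ H : D[X], H.IsDistinguishedAt (maximalIdeal D) ∧ aeval g H = 0 := by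
  obtain ⟨F, hF, hFm⟩ := SetLike.not_le_iff_exists.mp hker
  have hF' : F.map (residue D) ≠ 0 := by
    contrapose! hFm
    rw [← coe_mapRingHom, ← RingHom.mem_ker, ker_mapRingHom, ker_residue] at hFm
    exact hFm
  obtain ⟨H, U, rfl, hH, hU⟩ := exists_isDistinguishedAt_mul_of_map_residue_ne_zero hF'
  refine ⟨H, hH, ?_⟩
  rw [RingHom.mem_ker, map_mul] at hF
  refine (mul_eq_zero.mp hF).resolve_right fun hU0 => ‹P.IsPrime›.ne_top ?_
  refine P.eq_top_of_isUnit_mem ?_ (hU.map (algebraMap D E))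
  rw [← aeval_mem_iff_algebraMap_coeff_zero_mem hgP, hU0]
  exact P.zero_mem

theorem le_ker_of_lt_maximalIdeal [IsLocalRing D] (hsurj : Function.Surjective (aeval (R := D) g))
    {H : D[X]} (hH : H.IsDistinguishedAt (maximalIdeal D)) (hHg : aeval g H = 0)
    (hgP : g ∈ P) (hht : P.height ≤ 1) (hmP : (maximalIdeal D).map (algebraMap D E) ≤ P)
    {p : Ideal D} [p.IsPrime] (hker : RingHom.ker (algebraMap D E) ≤ p) (hp : p < maximalIdeal D) :
    p ≤ RingHom.ker (algebraMap D E) := by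
  have hint : Algebra.IsIntegral D E := by
    have hg : IsIntegral D g := ⟨H, hH.monic, hHg⟩
    refine ⟨fun e => ?_⟩
    obtain ⟨F, rfl⟩ := hsurj e
    exact .of_mem_of_fg _ hg.fg_adjoin_singleton _ (aeval_mem_adjoin_singleton D g)
  have hpow : g ^ H.natDegree ∈ (maximalIdeal D).map (algebraMap D E) :=
    hH.toIsWeaklyEisensteinAt.pow_natDegree_le_of_aeval_zero_of_monic_mem_map hHg hH.monic _
      natDegree_map_le
  have hmP' : P.comap (algebraMap D E) = maximalIdeal D :=
    ((maximalIdeal.isMaximal D).eq_of_le (Ideal.IsPrime.ne_top inferInstance)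
      (Ideal.map_le_iff_le_comap.mp hmP)).symm
  obtain ⟨Q, -, hQ, rfl⟩ := Ideal.exists_ideal_over_prime_of_isIntegral p (⊥ : Ideal E)
    (by rwa [← RingHom.ker_eq_comap_bot])
  obtain ⟨M, hM, hQM⟩ := Q.exists_le_maximal hQ.ne_top
  have hmM : M.comap (algebraMap D E) = maximalIdeal D :=
    eq_maximalIdeal (Ideal.isMaximal_comap_of_isIntegral_of_isMaximal M)
  have hgM : g ∈ M :=
    hM.isPrime.mem_of_pow_mem _ (Ideal.map_le_iff_le_comap.mpr hmM.ge hpow)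
  obtain rfl : M = P := eq_of_comap_eq_of_surjective_aeval hsurj hgM hgP (by rw [hmM, hmP'])
  have hQ0 := eq_bot_of_lt_of_height_le_one hht (hQM.lt_of_ne fun h => hp.ne (by rw [h, hmM]))
  rw [hQ0, RingHom.ker_eq_comap_bot]

theorem not_map_maximalIdeal_le_of_height_le_one [IsLocalRing D]
    [IsAdicComplete (maximalIdeal D) D]
    (hd : 2 ≤ ringKrullDim (D ⧸ RingHom.ker (algebraMap D E)))
    (hsurj : Function.Surjective (aeval (R := D) g)) (hgP : g ∈ P) (hht : P.height ≤ 1) :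
    ¬ (maximalIdeal D).map (algebraMap D E) ≤ P := by
  intro hmP
  obtain ⟨p, hp, hkp, hpm⟩ := exists_isPrime_lt_lt_maximalIdeal hd
  obtain ⟨H, hH, hHg⟩ := exists_isDistinguishedAt_aeval_eq_zero hgP
    (not_ker_aeval_le_map_C hsurj hgP hht (hkp.trans hpm).not_ge hmP)
  exact hkp.not_ge (le_ker_of_lt_maximalIdeal hsurj hH hHg hgP hht hmP hkp.le hpm)

end Monogenic

theorem isIntegral_of_mem_adjoin_inv {D K : Type*} [CommRing D] [Field K] [Algebra D K] {f : K}
    (hf : f ∈ Algebra.adjoin D {f⁻¹}) : IsIntegral D f := by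
  obtain rfl | hf0 := eq_or_ne f 0
  · exact isIntegral_zero
  obtain ⟨F, hF⟩ := Algebra.adjoin_mem_exists_aeval _ _ hf
  let _ : Invertible f⁻¹ := invertibleOfNonzero (inv_ne_zero hf0)
  refine ⟨X ^ (F.natDegree + 1) - F.reverse, ?_, ?_⟩
  · exact monic_X_pow_sub (degree_le_natDegree.trans_lt
      (Nat.cast_lt.mpr (Nat.lt_succ_of_le F.reverse_natDegree_le)))
  · have h := eval₂_reverse_mul_pow (algebraMap D K) f⁻¹ F
    rw [← aeval_def f⁻¹, hF, invOf_eq_inv, inv_inv, inv_pow,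
      mul_inv_eq_iff_eq_mul₀ (pow_ne_zero _ hf0)] at h
    rw [eval₂_sub, eval₂_X_pow, h, pow_succ', sub_self]

theorem isIntegral_of_isUnit_inv {D K : Type*} [CommRing D] [Field K] [Algebra D K] {f : K}
    (h : IsUnit (⟨f⁻¹, Algebra.self_mem_adjoin_singleton D _⟩ : Algebra.adjoin D {f⁻¹})) :
    IsIntegral D f := by
  obtain ⟨e, he⟩ := h.exists_left_inv
  have hef : (e : K) = f := by
    simpa using eq_inv_of_mul_eq_one_left congr(((Algebra.adjoin D {f⁻¹}).val $he))
  exact isIntegral_of_mem_adjoin_inv (by simpa only [hef] using e.2)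

theorem mem_of_isIntegral_of_algebraMap_eq_mul {E K : Type*} [CommRing E] [CommRing K]
    [Algebra E K] [FaithfulSMul E K] {P : Ideal E} [P.IsPrime] {g x : E} (hg : g ∈ P) {y : K}
    (hy : IsIntegral E y) (h : algebraMap E K x = y * algebraMap E K g) : x ∈ P := by
  have : FaithfulSMul E (integralClosure E K) := .tower_bot E (integralClosure E K) K
  obtain ⟨Q, hQ, hQP⟩ := P.nonempty_primesOver (S := integralClosure E K)
  have hx : algebraMap E (integralClosure E K) x = ⟨y, hy⟩ * algebraMap E _ g := Subtype.ext h
  rw [Q.mem_of_liesOver P] at hg ⊢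
  exact hx ▸ Q.mul_mem_left _ hg

theorem isIntegral_of_forall_mem_maximalIdeal_of_field {D K : Type*} [CommRing D]
    [IsNoetherianRing D] [IsLocalRing D] [IsAdicComplete (maximalIdeal D) D] [Field K] [Algebra D K]
    (hd : 2 ≤ ringKrullDim (D ⧸ RingHom.ker (algebraMap D K))) {f : K}
    (hf : ∀ x ∈ maximalIdeal D, IsIntegral D (x • f)) : IsIntegral D f := by
  by_contra hn
  let E := Algebra.adjoin D {f⁻¹}
  let g : E := ⟨f⁻¹, Algebra.self_mem_adjoin_singleton D _⟩
  have hsurj : Function.Surjective (aeval (R := D) g) := by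
    rintro ⟨e, he⟩
    obtain ⟨F, rfl⟩ := Algebra.adjoin_mem_exists_aeval D _ he
    exact ⟨F, Subtype.ext (aeval_algHom_apply E.val g F).symm⟩
  have hg : Ideal.span {g} ≠ ⊤ := by
    rw [Ne, Ideal.span_singleton_eq_top]
    exact fun hu => hn (isIntegral_of_isUnit_inv hu)
  obtain ⟨P, hP⟩ := Ideal.nonempty_minimalPrimes hg
  have : P.IsPrime := hP.isPrime
  have hgP : g ∈ P := hP.le (Ideal.mem_span_singleton_self g)
  have : IsNoetherianRing E := isNoetherianRing_of_surjective _ _ (aeval (R := D) g).toRingHom hsurj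
  rw [IsScalarTower.algebraMap_eq D E K,
    RingHom.ker_comp_of_injective _ (FaithfulSMul.algebraMap_injective E K)] at hd
  refine not_map_maximalIdeal_le_of_height_le_one hd hsurj hgP
    (Ideal.height_le_one_of_isPrincipal_of_mem_minimalPrimes _ P hP) ?_
  rw [Ideal.map_le_iff_le_comap]
  intro x hx
  have hf0 : f ≠ 0 := fun h => hn (h ▸ isIntegral_zero)
  have hxf : algebraMap E K (algebraMap D E x) = x • f * algebraMap E K g := by
    rw [← IsScalarTower.algebraMap_apply, Algebra.smul_def]
    exact (mul_inv_cancel_right₀ hf0 _).symm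
  exact mem_of_isIntegral_of_algebraMap_eq_mul (E := E) hgP (hf x hx).tower_top hxf

theorem isIntegral_of_forall_minimalPrimes {D T : Type*} [CommRing D] [CommRing T] [Algebra D T]
    {t : T} (h : ∀ P ∈ minimalPrimes T, IsIntegral D (Ideal.Quotient.mk P t)) : IsIntegral D t := by
  let S : Submonoid T :=
    { carrier := {y | ∃ F : D[X], F.Monic ∧ aeval t F = y}
      one_mem' := ⟨1, monic_one, map_one _⟩
      mul_mem' := by
        rintro _ _ ⟨F, hF, rfl⟩ ⟨G, hG, rfl⟩
        exact ⟨F * G, hF.mul hG, map_mul _ _ _⟩ }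
  suffices (0 : T) ∈ S from this
  by_contra hS
  obtain ⟨p, hp, -, hpS⟩ := Ideal.exists_le_prime_disjoint ⊥ S
    (Set.disjoint_left.mpr fun y hy hyS => hS (by rwa [← Ideal.mem_bot.mp hy]))
  obtain ⟨P, hP, hPp⟩ := Ideal.exists_minimalPrimes_le (bot_le (a := p))
  obtain ⟨F, hF, hFt⟩ := h P hP
  have hFP : aeval t F ∈ P := by
    rw [← Ideal.Quotient.eq_zero_iff_mem, ← Ideal.Quotient.mkₐ_eq_mk D, ← aeval_algHom_apply]
    exact hFt
  exact Set.disjoint_left.mp hpS (hPp hFP) ⟨F, hF, rfl⟩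

theorem isIntegral_of_forall_mem_maximalIdeal {D T : Type*} [CommRing D] [IsNoetherianRing D]
    [IsLocalRing D] [IsAdicComplete (maximalIdeal D) D] [CommRing T] [Algebra D T]
    (hd : ∀ P ∈ minimalPrimes T, 2 ≤ ringKrullDim (D ⧸ P.under D)) {t : T}
    (ht : ∀ x ∈ maximalIdeal D, IsIntegral D (x • t)) : IsIntegral D t := by
  refine isIntegral_of_forall_minimalPrimes fun P hP => ?_
  have : P.IsPrime := hP.isPrime
  have hinj : Function.Injective (IsScalarTower.toAlgHom D (T ⧸ P) P.ResidueField) :=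
    P.injective_algebraMap_quotient_residueField
  rw [← isIntegral_algHom_iff _ hinj]
  refine isIntegral_of_forall_mem_maximalIdeal_of_field ?_ fun x hx => ?_
  · rw [IsScalarTower.algebraMap_eq D T P.ResidueField, ← RingHom.comap_ker,
      P.ker_algebraMap_residueField]
    exact hd P hP
  · rw [← map_smul]
    exact (ht x hx).map (IsScalarTower.toAlgHom D T P.ResidueField)

theorem under_mem_minimalPrimes_of_hasGoingDown {D T : Type*} [CommRing D] [CommRing T]
    [Algebra D T] [Algebra.HasGoingDown D T] {P : Ideal T} (hP : P ∈ minimalPrimes T) :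
    P.under D ∈ minimalPrimes D := by
  have := hP.isPrime
  obtain ⟨q, hq, hqP⟩ := Ideal.exists_minimalPrimes_le (bot_le (a := P.under D))
  have := hq.isPrime
  obtain ⟨Q, hQP, hQ, hQq⟩ := Ideal.exists_ideal_le_liesOver_of_le P hqP
  obtain rfl : Q = P := hQP.antisymm (hP.2 ⟨hQ, bot_le⟩ hQP)
  rwa [hQq.over] at hq

theorem map_annihilator_eq_top_of_one_tmul_eq_zero {R B M : Type*} [CommRing R] [CommRing B]
    [Algebra R B] [Module.Flat R B] [AddCommGroup M] [Module R M] {m : M}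
    (hm : (1 : B) ⊗ₜ[R] m = 0) :
    (Submodule.span R {m}).annihilator.map (algebraMap R B) = ⊤ := by
  have hm' : ∑ _i : Unit, m ⊗ₜ[R] (1 : B) = 0 := by
    simpa using congr(TensorProduct.comm R B M $hm)
  obtain ⟨k, a, y, hy, ha⟩ := vanishesTrivially_of_sum_tmul_eq_zero_of_rTensor_injective R
    (Module.Flat.rTensor_preserves_injective_linearMap _ (Submodule.injective_subtype _)) hm'
  rw [Ideal.eq_top_iff_one, show (1 : B) = _ from hy ()]
  refine sum_mem fun j _ => ?_
  rw [Algebra.smul_def]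
  refine Ideal.mul_mem_right _ _ (Ideal.mem_map_of_mem _ ?_)
  rw [Submodule.mem_annihilator_span_singleton]
  simpa using ha j

theorem isIntegral_smul_of_smul_pow_mem_map_degreeLT {R Q : Type*} [CommRing R] [CommRing Q]
    [Algebra R Q] {f : Q} {s : R} {n : ℕ}
    (h : s • f ^ n ∈ (degreeLT R n).map (aeval f).toLinearMap) : IsIntegral R (s • f) := by
  obtain rfl | hs := eq_or_ne s 0
  · rw [zero_smul]
    exact isIntegral_zero
  obtain ⟨F, hF, hFf⟩ := h
  have hdeg : F.degree < (C s * X ^ n).degree := by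
    rwa [degree_C_mul_X_pow _ hs, ← mem_degreeLT]
  have hlead : (C s * X ^ n - F).leadingCoeff = s := by
    rw [leadingCoeff_sub_of_degree_lt hdeg, leadingCoeff_C_mul_X_pow]
  rw [← hlead]
  refine isIntegral_leadingCoeff_smul _ _ ?_
  rw [map_sub, map_mul, aeval_C, aeval_X_pow, ← Algebra.smul_def, ← hFf]
  exact sub_self _

theorem exists_notMem_isIntegral_smul_of_isIntegral_one_tmul {R B Q : Type*} [CommRing R]
    [CommRing B] [Algebra R B] [Module.Flat R B] [CommRing Q] [Algebra R Q] {p : Ideal R}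
    (hp : p.map (algebraMap R B) ≠ ⊤) {f : Q}
    (hf : IsIntegral B ((1 : B) ⊗ₜ[R] f)) : ∃ s ∉ p, IsIntegral R (s • f) := by
  obtain ⟨F, hF, hFf⟩ := hf
  let N : Submodule R Q := (degreeLT R F.natDegree).map (aeval f).toLinearMap
  have hpow {i : ℕ} (hi : i < F.natDegree) : N.mkQ (f ^ i) = 0 := by
    rw [Submodule.mkQ_apply, Submodule.Quotient.mk_eq_zero]
    exact ⟨X ^ i, mem_degreeLT.mpr ((degree_X_pow_le i).trans_lt (by exact_mod_cast hi)),
      aeval_X_pow f⟩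
  have hzero : (1 : B) ⊗ₜ[R] N.mkQ (f ^ F.natDegree) = 0 := by
    have h := congr(N.mkQ.lTensor B $hFf)
    simp only [eval₂_eq_sum_range, Finset.sum_range_succ, hF.coeff_natDegree, map_add, map_sum,
      Algebra.TensorProduct.algebraMap_apply, Algebra.TensorProduct.tmul_pow,
      Algebra.TensorProduct.tmul_mul_tmul, LinearMap.lTensor_tmul, one_pow, one_mul, mul_one,
      Algebra.algebraMap_self_apply, map_zero] at h
    rwa [Finset.sum_eq_zero fun i hi => by rw [hpow (Finset.mem_range.mp hi), tmul_zero],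
      zero_add] at h
  have htop := map_annihilator_eq_top_of_one_tmul_eq_zero hzero
  obtain ⟨s, hs, hsp⟩ := SetLike.not_le_iff_exists.mp fun hle =>
    hp (top_le_iff.mp (htop ▸ Ideal.map_mono hle))
  refine ⟨s, hsp, isIntegral_smul_of_smul_pow_mem_map_degreeLT (n := F.natDegree) ?_⟩
  rwa [Submodule.mem_annihilator_span_singleton, ← map_smul, Submodule.mkQ_apply,
    Submodule.Quotient.mk_eq_zero] at hs

theorem exists_notMem_isIntegral_smul_of_map_eq_maximalIdeal {R B Q : Type*} [CommRing R]
    [CommRing B] [IsNoetherianRing B] [IsLocalRing B] [IsAdicComplete (maximalIdeal B) B]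
    [Algebra R B] [Module.Flat R B] [CommRing Q] [Algebra R Q] [Module.Flat R Q] {p : Ideal R}
    (hp : p.map (algebraMap R B) = maximalIdeal B)
    (hd : ∀ q ∈ minimalPrimes B, 2 ≤ ringKrullDim (B ⧸ q)) {f : Q}
    (hf : ∀ x ∈ p, IsIntegral R (x • f)) : ∃ s ∉ p, IsIntegral R (s • f) := by
  have hmp : maximalIdeal B ≤ (integralClosure B (B ⊗[R] Q)).toSubmodule.comap
      (LinearMap.toSpanSingleton B _ (1 ⊗ₜ f)) := by
    rw [← hp, Ideal.map_le_iff_le_comap]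
    intro x hx
    change IsIntegral B (algebraMap R B x • (1 : B) ⊗ₜ[R] f)
    rw [algebraMap_smul, ← tmul_smul]
    exact (hf x hx).map_of_comp_eq (algebraMap R B)
      (Algebra.TensorProduct.includeRight : Q →ₐ[R] B ⊗[R] Q).toRingHom (by ext; simp)
  refine exists_notMem_isIntegral_smul_of_isIntegral_one_tmul (B := B)
    (hp ▸ (maximalIdeal.isMaximal B).ne_top) ?_
  exact isIntegral_of_forall_mem_maximalIdeal
    (fun P hP => hd _ (under_mem_minimalPrimes_of_hasGoingDown hP)) hmp

theorem exists_mvPowerSeries_ringHom {σ A S : Type*} [Finite σ] [CommRing A] [CommRing S]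
    (φ : A →+* S) (J : Ideal S) [IsAdicComplete J S] {a : σ → S} (ha : ∀ i, a i ∈ J) :
    ∃ F : MvPowerSeries σ A →+* S, (∀ r, F (MvPowerSeries.C r) = φ r) ∧
      ∀ i, F (MvPowerSeries.X i) = a i := by
  let _ : WithIdeal S := ⟨J⟩
  let _ : UniformSpace A := ⊥
  have : DiscreteTopology A := ⟨rfl⟩
  have : IsUniformAddGroup A := inferInstance
  obtain ⟨_, _⟩ := (IsAdic.isAdicComplete_iff (I := J) rfl).mp ‹_›
  have hφ : Continuous φ := continuous_of_discreteTopology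
  have haa : MvPowerSeries.HasEval a :=
    ⟨fun i => WithIdeal.isTopologicallyNilpotent_of_mem (ha i), by simp⟩
  refine ⟨MvPowerSeries.eval₂Hom hφ haa, fun r => ?_, fun i => ?_⟩
  · rw [MvPowerSeries.coe_eval₂Hom, MvPowerSeries.eval₂_C]
  · rw [MvPowerSeries.coe_eval₂Hom, MvPowerSeries.eval₂_X]

theorem isNoetherianRing_of_isAdicComplete {A S : Type*} [CommRing A] [IsNoetherianRing A]
    [CommRing S] {φ : A →+* S} {J : Ideal S} [IsAdicComplete J S] (hJ : J.FG)
    (hφ : Function.Surjective ((Ideal.Quotient.mk J).comp φ)) : IsNoetherianRing S := by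
  obtain ⟨k, a, rfl⟩ := Submodule.fg_iff_exists_fin_generating_family.mp hJ
  obtain ⟨F, hC, hX⟩ := exists_mvPowerSeries_ringHom φ _
    (fun i => Submodule.subset_span (Set.mem_range_self (f := a) i))
  have hmap : (Ideal.span (Set.range MvPowerSeries.X)).map F = Submodule.span S (Set.range a) := by
    rw [Ideal.map_span, ← Set.range_comp, show F ∘ MvPowerSeries.X = a from funext hX,
      Ideal.submodule_span_eq]
  have : IsHausdorff ((Ideal.span (Set.range MvPowerSeries.X)).map F) S := by
    rw [hmap]
    infer_instance
  refine isNoetherianRing_of_surjective _ _ F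
    (surjective_of_mk_map_comp_surjective (I := Ideal.span (Set.range MvPowerSeries.X)) F ?_)
  rw [hmap]
  intro y
  obtain ⟨r, rfl⟩ := hφ y
  exact ⟨MvPowerSeries.C r, congr(Ideal.Quotient.mk _ $(hC r))⟩

instance isNoetherianRing_adicCompletion_maximalIdeal {A : Type*} [CommRing A]
    [IsNoetherianRing A] [IsLocalRing A] :
    IsNoetherianRing (AdicCompletion (maximalIdeal A) A) := by
  refine isNoetherianRing_of_isAdicComplete (φ := algebraMap A _) (J := maximalIdeal _) ?_
    fun y => ?_
  · rw [AdicCompletion.maximalIdeal_eq_map]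
    exact (maximalIdeal A).fg_of_isNoetherianRing.map _
  · obtain ⟨r, hr⟩ := (AdicCompletion.residueField_map_bijective A).2 y
    obtain ⟨a, rfl⟩ := residue_surjective r
    exact ⟨a, hr⟩

theorem ringKrullDim_le_of_hasGoingDown (A B : Type*) [CommRing A] [IsNoetherianRing A]
    [IsLocalRing A] [CommRing B] [IsNoetherianRing B] [IsLocalRing B] [Algebra A B]
    [Algebra.HasGoingDown A B] [IsLocalHom (algebraMap A B)] :
    ringKrullDim A ≤ ringKrullDim B := by
  have : (maximalIdeal B).LiesOver (maximalIdeal A) := ⟨(maximalIdeal_comap (algebraMap A B)).symm⟩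
  rw [← maximalIdeal_height_eq_ringKrullDim, ← maximalIdeal_height_eq_ringKrullDim,
    Ideal.height_eq_height_add_of_liesOver_of_hasGoingDown (maximalIdeal A) (maximalIdeal B)]
  exact WithBot.coe_le_coe.mpr le_self_add

theorem isIntegral_of_forall_isPrime_exists_notMem {R T : Type*} [CommRing R] [IsNoetherianRing R]
    [CommRing T] [Algebra R T] {I : Ideal R} {f : T} (hf : ∀ i ∈ I, IsIntegral R (i • f))
    (h : ∀ (p : Ideal R) [p.IsPrime], I ≤ p → ∀ g : T, (∀ x ∈ p, IsIntegral R (x • g)) →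
      ∃ s ∉ p, IsIntegral R (s • g)) :
    IsIntegral R f := by
  let N := (integralClosure R T).toSubmodule
  have hN (x : R) (t : T) :
      x ∈ (⊥ : Submodule R (T ⧸ N)).colon {N.mkQ t} ↔ IsIntegral R (x • t) := by
    rw [Submodule.mem_colon_singleton, Submodule.mem_bot, ← map_smul, Submodule.mkQ_apply,
      Submodule.Quotient.mk_eq_zero]
    rfl
  by_contra hn
  obtain ⟨p, hp, hfp⟩ := exists_le_isAssociatedPrime_of_isNoetherianRing R (N.mkQ f) (by
    rwa [Ne, Submodule.mkQ_apply, Submodule.Quotient.mk_eq_zero])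
  obtain ⟨hp, y, rfl⟩ := isAssociatedPrime_iff.mp hp
  obtain ⟨g, rfl⟩ := N.mkQ_surjective y
  obtain ⟨s, hs, hsg⟩ := h _ (fun i hi => hfp ((hN i f).mpr (hf i hi))) g fun x hx => (hN x g).mp hx
  exact hs ((hN s g).mpr hsg)

/-- The completion of the local ring `R_p` at its maximal ideal, in the form in which it occurs in
`QuasiUnmixed`. -/
abbrev CompletedLocalization {R : Type*} [CommRing R] (p : Ideal R) [p.IsPrime] : Type _ :=
  AdicCompletion (maximalIdeal (Localization.AtPrime p)) (Localization.AtPrime p)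

section CompletedLocalization

variable {R : Type*} [CommRing R] [IsNoetherianRing R] (p : Ideal R) [p.IsPrime]

instance flat_completedLocalization : Module.Flat R (CompletedLocalization p) :=
  .trans R (Localization.AtPrime p) _

theorem map_completedLocalization_eq_maximalIdeal :
    p.map (algebraMap R (CompletedLocalization p)) = maximalIdeal (CompletedLocalization p) := by
  rw [IsScalarTower.algebraMap_eq R (Localization.AtPrime p), ← Ideal.map_map,
    Localization.AtPrime.map_eq_maximalIdeal, AdicCompletion.maximalIdeal_eq_map]

theorem height_le_ringKrullDim_completedLocalization :
    p.height ≤ ringKrullDim (CompletedLocalization p) := by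
  rw [← IsLocalization.AtPrime.ringKrullDim_eq_height p (Localization.AtPrime p)]
  exact ringKrullDim_le_of_hasGoingDown _ _

end CompletedLocalization

theorem idealHt_le_height {R : Type*} [CommRing R] {I p : Ideal R} [hp : p.IsPrime] (h : I ≤ p) :
    idealHt I ≤ p.height :=
  (iInf₂_le (⟨p, hp⟩ : PrimeSpectrum R) h).trans_eq
    (PrimeSpectrum.height_eq_orderHeight ⟨p, hp⟩).symm

theorem LocallyQuasiUnmixed.idealHt_le_ringKrullDim_quotient {R : Type*} [CommRing R]
    [IsNoetherianRing R] (hR : LocallyQuasiUnmixed R) {I p : Ideal R} [p.IsPrime] (hIp : I ≤ p)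
    {q : Ideal (CompletedLocalization p)} (hq : q ∈ minimalPrimes (CompletedLocalization p)) :
    idealHt I ≤ ringKrullDim (CompletedLocalization p ⧸ q) := by
  rw [hR p q hq]
  exact (WithBot.coe_le_coe.mpr (idealHt_le_height hIp)).trans
    (height_le_ringKrullDim_completedLocalization p)

theorem stmt14_general {R Q : Type*} [CommRing R] [IsNoetherianRing R] [CommRing Q] [Algebra R Q]
    [Module.Flat R Q] {I : Ideal R}
    (hI : ∀ (p : Ideal R) [p.IsPrime], I ≤ p → ∀ q ∈ minimalPrimes (CompletedLocalization p),
      2 ≤ ringKrullDim (CompletedLocalization p ⧸ q))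
    {f : Q} (hf : ∀ i ∈ I, IsIntegral R (i • f)) : IsIntegral R f :=
  isIntegral_of_forall_isPrime_exists_notMem hf fun p _ hIp _ hg =>
    exists_notMem_isIntegral_smul_of_map_eq_maximalIdeal
      (map_completedLocalization_eq_maximalIdeal p) (hI p hIp) hg

end

/-- if `R` is a locally quasi-unmixed Noetherian ring, then
`R̃ ⊆ R̄`, the integral closure of `R` in its total quotient ring. -/
theorem stmt14 {R : Type*} [CommRing R] [IsNoetherianRing R]
    (hqu : LocallyQuasiUnmixed R) :
    {f : FractionRing R | ∃ I : Ideal R, 2 ≤ idealHt I ∧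
        ∀ i ∈ I, i • f ∈ Set.range (algebraMap R (FractionRing R))} ⊆
      {f | IsIntegral R f} := fun _ ⟨_, hI, hf⟩ =>
  stmt14_general
    (fun _ _ hIp _ hq =>
      (WithBot.coe_le_coe.mpr hI).trans (hqu.idealHt_le_ringKrullDim_quotient hIp hq))
    fun i hi => (hf i hi).elim fun _ hr => hr ▸ isIntegral_algebraMap
end

section
/- Let $R$ be a Noetherian local ring of dimension 2 in which all minimal primes have the same codimension, possessing a canonical module, and suppose $\overline{R}$ is a finitely generated $R$-module. Let $a,b$ be non-zerodivisors in the maximal ideal such that $a\in R:\overline{R}$, the pair $a,b$ is a system of parameters, and $aR:_R b=aR:_R b^2$. Then $\mathrm{U}(aR)=aR:_R b$ and hence $\widetilde{R}=\frac{R}{a}\cap\frac{R}{b}$. -/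
open Pointwise RingTheory.Sequence

/-- A Gorenstein local ring: a Noetherian local ring admitting a system of
parameters (a list of non-units of length `dim`) which is a regular sequence
generating an irreducible ideal. -/
def GorensteinLocalRing (S : Type*) [CommRing S] : Prop :=
  IsNoetherianRing S ∧ IsLocalRing S ∧
    ∃ l : List S, (∀ x ∈ l, ¬ IsUnit x) ∧
      (l.length : WithBot ℕ∞) = ringKrullDim S ∧ IsWeaklyRegular S l ∧
      ∀ I J : Ideal S, I ⊓ J = Ideal.ofList l →
        I = Ideal.ofList l ∨ J = Ideal.ofList l

/-
Write `R̃` for the set of fractions `f` with `I f ⊆ R` for some ideal `I` of height at least `2`.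
Everything reduces to the integrality of its elements: then `a f ∈ R` by the choice of `a`, and
the stabilisation of `aR : bⁿ` turns `bⁿ f ∈ R` into `b f ∈ R`.

Integrality may be checked modulo every minimal prime of the fraction ring, that is, for the
image `y` of `f` in a domain `B` over a Cohen–Macaulay ring `S` mapping onto `R`, with kernel `P`.
Killing a maximal `S`-regular sequence inside `P` produces a Cohen–Macaulay module `N` having `P`
as an associated prime. If `r, s` is an `N`-regular sequence, so are powers of `r` and `s`, which
send `y` into `S / P`; on the submodule `W` of elements killed by `P` they still form a regular
sequence, and this is what makes multiplication by `y` a well-defined endomorphism of `W`. As `W`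
is finite and faithful over `S / P`, Cayley–Hamilton yields an integral equation for `y`.
-/

universe u v

section KrullDim

open IsLocalRing

variable {R : Type*} [CommRing R]

theorem ringKrullDim_quotient_add_one_le_of_lt {p q : Ideal R} [p.IsPrime] (h : p < q) :
    ringKrullDim (R ⧸ q) + 1 ≤ ringKrullDim (R ⧸ p) := by
  obtain ⟨x, hxq, hxp⟩ := SetLike.exists_of_lt h
  refine ringKrullDim_succ_le_of_surjective (Ideal.Quotient.factor h.le)
    (Ideal.Quotient.factor_surjective h.le) (r := Ideal.Quotient.mk p x) ?_ ?_
  · exact mem_nonZeroDivisors_of_ne_zero (by rwa [Ne, Ideal.Quotient.eq_zero_iff_mem])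
  · rwa [Ideal.Quotient.factor_mk, Ideal.Quotient.eq_zero_iff_mem]

theorem ringKrullDim_quotient_le_supportDim {M : Type*} [AddCommGroup M] [Module R M]
    [Module.Finite R M] {I : Ideal R} (hI : Module.annihilator R M ≤ I) :
    ringKrullDim (R ⧸ I) ≤ Module.supportDim R M := by
  rw [Module.supportDim_eq_ringKrullDim_quotient_annihilator]
  exact ringKrullDim_le_of_surjective _ (Ideal.Quotient.factor_surjective hI)

theorem ringKrullDim_quotient_eq_of_mem_minimalPrimes
    (hunmixed : ∀ p ∈ minimalPrimes R, ∀ q ∈ minimalPrimes R,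
      ringKrullDim (R ⧸ p) = ringKrullDim (R ⧸ q))
    {p : Ideal R} (hp : p ∈ minimalPrimes R) : ringKrullDim (R ⧸ p) = ringKrullDim R := by
  refine le_antisymm (ringKrullDim_quotient_le p) (iSup_le fun c ↦ ?_)
  obtain ⟨q, hq, hqc⟩ := Ideal.exists_minimalPrimes_le (I := ⊥) (J := c.head.asIdeal) bot_le
  rw [hunmixed p hp q hq, ringKrullDim_quotient]
  exact le_iSup_of_le (⟨c.length, fun i ↦ ⟨c i, hqc.trans (c.head_le i)⟩, c.step⟩ :
    LTSeries (PrimeSpectrum.zeroLocus (q : Set R))) le_rfl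

theorem idealHt_eq_height (I : Ideal R) : idealHt I = I.height := by
  refine le_antisymm ?_ (le_iInf₂ fun p hp ↦
    (Ideal.height_mono hp).trans_eq (PrimeSpectrum.height_eq_orderHeight p))
  rw [Ideal.height_eq_inf_minimalPrimes]
  exact le_iInf₂ fun p hp ↦ (iInf₂_le ⟨p, hp.1.1⟩ hp.1.2).trans_eq
    (PrimeSpectrum.height_eq_orderHeight ⟨p, hp.1.1⟩).symm

theorem ringKrullDim_le_height_iff_maximalIdeal_le_radical [IsNoetherianRing R] [IsLocalRing R]
    {I : Ideal R} : ringKrullDim R ≤ I.height ↔ maximalIdeal R ≤ I.radical := by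
  constructor
  · intro h
    rw [Ideal.radical_eq_sInf]
    refine le_sInf fun p ⟨hIp, hp⟩ ↦ (Ideal.height_eq_ringKrullDim_iff.mp ?_).ge
    exact (Ideal.height_le_ringKrullDim_of_ne_top hp.ne_top).antisymm
      (h.trans (WithBot.coe_le_coe.mpr (Ideal.height_mono hIp)))
  · intro h
    rw [← maximalIdeal_height_eq_ringKrullDim, WithBot.coe_le_coe,
      Ideal.height_eq_inf_minimalPrimes I]
    refine le_iInf₂ fun p hp ↦ Ideal.height_mono (h.trans ?_)
    exact (hp.1.1.radical_le_iff).mpr hp.1.2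

end KrullDim

section AssociatedPrimes

variable {S : Type*} [CommRing S] [IsNoetherianRing S] {M : Type*} [AddCommGroup M] [Module S M]
  {p : Ideal S}

theorem exists_forall_mem_iff_smul_eq_zero_of_mem_associatedPrimes
    (hp : p ∈ associatedPrimes S M) : ∃ w : M, ∀ s, s ∈ p ↔ s • w = 0 := by
  obtain ⟨-, w, hw⟩ := isAssociatedPrime_iff.mp (AssociatedPrimes.mem_iff.mp hp)
  exact ⟨w, fun s ↦ by rw [hw, Submodule.mem_colon_singleton, Submodule.mem_bot]⟩

theorem annihilator_torsionBySet_of_mem_associatedPrimes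
    (hp : p ∈ associatedPrimes S M) :
    Module.annihilator S (Submodule.torsionBySet S M (p : Set S)) = p := by
  obtain ⟨w, hmem⟩ := exists_forall_mem_iff_smul_eq_zero_of_mem_associatedPrimes hp
  have hwp : w ∈ Submodule.torsionBySet S M (p : Set S) :=
    (Submodule.mem_torsionBySet_iff _ _).mpr fun s ↦ (hmem s).mp s.2
  refine le_antisymm (fun s hs ↦ ?_) fun s hs ↦ Module.mem_annihilator.mpr fun v ↦ ?_
  · exact (hmem s).mpr (congrArg Subtype.val (Module.mem_annihilator.mp hs ⟨w, hwp⟩))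
  · exact Subtype.ext ((Submodule.mem_torsionBySet_iff _ _).mp v.2 ⟨s, hs⟩)

theorem exists_isSMulRegular_or_exists_associatedPrimes_le [Module.Finite S M] (p : Ideal S) :
    (∃ x ∈ p, IsSMulRegular M x) ∨ ∃ q ∈ associatedPrimes S M, p ≤ q := by
  refine or_iff_not_imp_left.mpr fun hreg ↦ ?_
  have hsub : (p : Set S) ⊆ ⋃ q ∈ associatedPrimes S M, (q : Set S) := by
    rw [biUnion_associatedPrimes_eq_compl_regular]
    exact fun x hxp hx ↦ hreg ⟨x, hxp, hx⟩
  exact (Ideal.subset_union_prime_finite (associatedPrimes.finite S M) ⊥ ⊥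
    fun q hq _ _ ↦ IsAssociatedPrime.isPrime hq).mp hsub

end AssociatedPrimes

section CohenMacaulay

open IsLocalRing

/-- A Cohen–Macaulay module over a local ring: one with a regular sequence as long as the
dimension of its support. Regularity of a sequence excludes the zero module. -/
def IsCohenMacaulayModule (S M : Type*) [CommRing S] [AddCommGroup M] [Module S M] : Prop :=
  ∃ rs : List S, IsRegular M rs ∧ (rs.length : WithBot ℕ∞) = Module.supportDim S M

theorem mem_maximalIdeal_of_isRegular {S M : Type*} [CommRing S] [IsLocalRing S] [AddCommGroup M]
    [Module S M] {rs : List S} (h : IsRegular M rs) {r : S} (hr : r ∈ rs) :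
    r ∈ maximalIdeal S := by
  refine le_maximalIdeal (J := Ideal.ofList rs) (fun htop ↦ h.top_ne_smul ?_)
    (Ideal.subset_span hr)
  rw [htop, Submodule.top_smul]

theorem GorensteinLocalRing.isCohenMacaulayModule {S : Type*} [CommRing S]
    (hS : GorensteinLocalRing S) : IsCohenMacaulayModule S S := by
  obtain ⟨_, _, l, hl, hlen, hreg, -⟩ := hS
  refine ⟨l, ?_, hlen.trans (Module.supportDim_self_eq_ringKrullDim S).symm⟩
  exact (IsLocalRing.isRegular_iff_isWeaklyRegular_of_subset_maximalIdeal hl).mpr hreg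

variable {S : Type u} [CommRing S] [IsNoetherianRing S] [IsLocalRing S] {M : Type v}
  [AddCommGroup M] [Module S M] [Module.Finite S M]

open CategoryTheory Abelian in
theorem exists_isRegular_quotSMulTop [Small.{v} S] {x : S} (hx : IsSMulRegular M x)
    (hxm : x ∈ maximalIdeal S) {n : ℕ} {rs : List S} (hrs : IsRegular M rs)
    (hlen : rs.length = n + 1) :
    ∃ rs' : List S, rs'.length = n ∧ IsRegular (QuotSMulTop x M) rs' := by
  have := hrs.nontrivial
  have := nontrivial_quotSMulTop_of_mem_maximalIdeal M hxm
  have smul_lt (N : Type v) [AddCommGroup N] [Module S N] [Module.Finite S N] [Nontrivial N] :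
      maximalIdeal S • (⊤ : Submodule S N) < ⊤ :=
    (Submodule.top_ne_ideal_smul_of_le_jacobson_annihilator
      (maximalIdeal_le_jacobson _)).symm.lt_top
  -- Rees: regular sequences of length `n + 1` exist iff `Ext i (k, M) = 0` for all `i ≤ n`, and the
  -- long exact sequence of multiplication by `x` passes this on to `M / x M` with `n` for `n + 1`.
  let k := ModuleCat.of S (Shrink.{v} (S ⧸ maximalIdeal S))
  have hmem : ∃ rs : List S, rs.length = n + 1 ∧ (∀ r ∈ rs, r ∈ maximalIdeal S) ∧ IsRegular M rs :=
    ⟨rs, hlen, fun _ ↦ mem_maximalIdeal_of_isRegular hrs, hrs⟩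
  have hext : ∀ i < n + 1, Subsingleton (Ext k (ModuleCat.of S M) i) :=
    ((ModuleCat.exists_isRegular_tfae (maximalIdeal S) (n + 1) (ModuleCat.of S M)
      (smul_lt M)).out 1 3).mpr hmem
  have hext' : ∀ i < n, Subsingleton (Ext k (ModuleCat.of S (QuotSMulTop x M)) i) := fun i hi ↦ by
    have h₁ := AddCommGrpCat.isZero_of_iff_subsingleton.mpr (hext i (by omega))
    have h₂ := AddCommGrpCat.isZero_of_iff_subsingleton.mpr (hext (i + 1) (by omega))
    exact AddCommGrpCat.subsingleton_of_isZero <| ShortComplex.Exact.isZero_of_both_zeros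
      (Ext.covariant_sequence_exact₃' k
        (IsSMulRegular.smulShortComplex_shortExact (M := ModuleCat.of S M) hx) i (i + 1) rfl)
      (h₁.eq_zero_of_src _) (h₂.eq_zero_of_tgt _)
  obtain ⟨rs', hlen', -, hrs'⟩ := ((ModuleCat.exists_isRegular_tfae (maximalIdeal S) n
    (ModuleCat.of S (QuotSMulTop x M)) (smul_lt _)).out 1 3).mp hext'
  exact ⟨rs', hlen', hrs'⟩

theorem IsCohenMacaulayModule.quotSMulTop [Small.{v} S] (h : IsCohenMacaulayModule S M) {x : S}
    (hx : IsSMulRegular M x) (hxm : x ∈ maximalIdeal S) :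
    IsCohenMacaulayModule S (QuotSMulTop x M) := by
  obtain ⟨rs, hrs, hlen⟩ := h
  have := hrs.nontrivial
  have := nontrivial_quotSMulTop_of_mem_maximalIdeal M hxm
  have hdim := Module.supportDim_quotSMulTop_succ_eq_supportDim hx hxm
  rw [← hlen] at hdim
  cases hn : rs.length with
  | zero =>
    rw [hn] at hdim
    exact absurd ((ENat.WithBot.add_one_le_zero_iff _).mp hdim.le)
      (Module.supportDim_ne_bot_of_nontrivial S (QuotSMulTop x M))
  | succ n =>
    obtain ⟨rs', rfl, hrs'⟩ := exists_isRegular_quotSMulTop hx hxm hrs hn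
    rw [hn, Nat.cast_add_one] at hdim
    exact ⟨rs', hrs', (ENat.WithBot.add_one_cancel.mp hdim).symm⟩

theorem torsionBySet_eq_bot_of_le_smul_top {x : S} (hx : IsSMulRegular M x)
    (hxm : x ∈ maximalIdeal S) {s : Set S}
    (hle : Submodule.torsionBySet S M s ≤ x • ⊤) : Submodule.torsionBySet S M s = ⊥ := by
  have hsmul : Submodule.torsionBySet S M s ≤ x • Submodule.torsionBySet S M s := fun u hu ↦ by
    obtain ⟨v, -, rfl⟩ := (Submodule.mem_smul_pointwise_iff_exists _ _ _).mp (hle hu)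
    refine Submodule.smul_mem_pointwise_smul _ _ _ ((Submodule.mem_torsionBySet_iff _ _).mpr
      fun r ↦ hx ?_)
    simpa only [smul_comm x, smul_zero] using (Submodule.mem_torsionBySet_iff _ _).mp hu r
  exact Submodule.eq_bot_of_eq_pointwise_smul_of_mem_jacobson_annihilator
    (IsNoetherian.noetherian _) (hsmul.antisymm (Submodule.smul_le_self_of_tower _ _))
    (maximalIdeal_le_jacobson _ hxm)

theorem exists_associatedPrimes_quotSMulTop_lt {x : S} (hx : IsSMulRegular M x)
    (hxm : x ∈ maximalIdeal S) {p : Ideal S} (hp : p ∈ associatedPrimes S M) :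
    ∃ q ∈ associatedPrimes S (QuotSMulTop x M), p < q := by
  obtain ⟨w, hmem⟩ := exists_forall_mem_iff_smul_eq_zero_of_mem_associatedPrimes hp
  have hw0 : w ≠ 0 := fun h ↦
    (IsAssociatedPrime.isPrime hp).one_notMem ((hmem 1).mpr (by rw [h, smul_zero]))
  obtain ⟨t, htp, ht⟩ : ∃ t ∈ Submodule.torsionBySet S M (p : Set S), t ∉ x • (⊤ : Submodule S M) :=
    SetLike.not_le_iff_exists.mp fun hle ↦ hw0 <| by
      rw [← Submodule.mem_bot S, ← torsionBySet_eq_bot_of_le_smul_top hx hxm hle]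
      exact (Submodule.mem_torsionBySet_iff _ _).mpr fun s ↦ (hmem s).mp s.2
  obtain ⟨q, hq, hle⟩ := exists_le_isAssociatedPrime_of_isNoetherianRing S
    (Submodule.Quotient.mk t : QuotSMulTop x M) (by rwa [Ne, Submodule.Quotient.mk_eq_zero])
  have hmemq {s : S} (hs : s • t ∈ x • (⊤ : Submodule S M)) : s ∈ q := by
    refine hle (Submodule.mem_colon_singleton.mpr ?_)
    rwa [← Submodule.Quotient.mk_smul, Submodule.mem_bot, Submodule.Quotient.mk_eq_zero]
  refine ⟨q, hq, lt_of_le_of_ne (fun s hs ↦ hmemq ?_) ?_⟩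
  · rw [(Submodule.mem_torsionBySet_iff _ _).mp htp ⟨s, hs⟩]
    exact zero_mem _
  · rintro rfl
    have hxq := hmemq (Submodule.smul_mem_pointwise_smul t x ⊤ trivial)
    exact hw0 (hx (((hmem x).mp hxq).trans (smul_zero x).symm))

theorem length_le_ringKrullDim_quotient_of_isRegular {rs : List S} (h : IsRegular M rs)
    {p : Ideal S} (hp : p ∈ associatedPrimes S M) :
    (rs.length : WithBot ℕ∞) ≤ ringKrullDim (S ⧸ p) := by
  have hprime := IsAssociatedPrime.isPrime hp
  induction rs generalizing M p with
  | nil => exact ringKrullDim_nonneg_of_nontrivial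
  | cons x rs ih =>
    obtain ⟨hx, hrs⟩ := (isRegular_cons_iff M x rs).mp h
    obtain ⟨q, hq, hpq⟩ := exists_associatedPrimes_quotSMulTop_lt hx
      (mem_maximalIdeal_of_isRegular h List.mem_cons_self) hp
    calc ((x :: rs).length : WithBot ℕ∞) = rs.length + 1 := by rw [List.length_cons, Nat.cast_succ]
      _ ≤ ringKrullDim (S ⧸ q) + 1 := by gcongr; exact ih hrs hq (IsAssociatedPrime.isPrime hq)
      _ ≤ ringKrullDim (S ⧸ p) := ringKrullDim_quotient_add_one_le_of_lt hpq

theorem IsCohenMacaulayModule.eq_of_le_of_mem_associatedPrimes (h : IsCohenMacaulayModule S M)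
    {p : PrimeSpectrum S} (hp : p ∈ Module.support S M) {q : Ideal S}
    (hq : q ∈ associatedPrimes S M) (hpq : p.asIdeal ≤ q) : p.asIdeal = q := by
  obtain ⟨rs, hrs, hlen⟩ := h
  by_contra hne
  have hlt : (rs.length + 1 : WithBot ℕ∞) ≤ rs.length :=
    calc (rs.length + 1 : WithBot ℕ∞) ≤ ringKrullDim (S ⧸ q) + 1 := by
          gcongr; exact length_le_ringKrullDim_quotient_of_isRegular hrs hq
      _ ≤ ringKrullDim (S ⧸ p.asIdeal) :=
          ringKrullDim_quotient_add_one_le_of_lt (lt_of_le_of_ne hpq hne)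
      _ ≤ rs.length := by
          rw [hlen]
          exact ringKrullDim_quotient_le_supportDim (Module.mem_support_iff_of_finite.mp hp)
  exact lt_irrefl _ (ENat.WithBot.add_one_le_iff.mp hlt)

theorem IsCohenMacaulayModule.exists_mem_associatedPrimes [Small.{v} S]
    (h : IsCohenMacaulayModule S M) {p : PrimeSpectrum S} (hp : p ∈ Module.support S M) :
    ∃ (N : Type v) (_ : AddCommGroup N) (_ : Module S N), Module.Finite S N ∧
      IsCohenMacaulayModule S N ∧ p.asIdeal ∈ associatedPrimes S N := by
  obtain ⟨n, hn⟩ : ∃ n : ℕ, n = Module.supportDim S M := ⟨_, h.choose_spec.2⟩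
  induction n using Nat.strong_induction_on generalizing M with
  | _ n ih =>
    obtain ⟨x, hxp, hx⟩ | ⟨q, hq, hpq⟩ :=
      exists_isSMulRegular_or_exists_associatedPrimes_le (M := M) p.asIdeal
    · have hxm := le_maximalIdeal p.isPrime.ne_top hxp
      have hCM := h.quotSMulTop hx hxm
      obtain ⟨rs, -, hrs⟩ := id hCM
      refine ih rs.length ?_ hCM ?_ hrs
      · have hdim := Module.supportDim_quotSMulTop_succ_eq_supportDim hx hxm
        rw [← hn, ← hrs] at hdim
        norm_cast at hdim
        omega
      · rw [Module.support_quotSMulTop]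
        exact ⟨hp, Set.singleton_subset_iff.mpr hxp⟩
    · refine ⟨M, _, _, inferInstance, h, ?_⟩
      rwa [h.eq_of_le_of_mem_associatedPrimes hp hq hpq]

end CohenMacaulay

section RegularPair

open IsLocalRing

variable {S M : Type*} [CommRing S] [AddCommGroup M] [Module S M] {r s : S}

theorem isWeaklyRegular_pair_iff :
    IsWeaklyRegular M [r, s] ↔ IsSMulRegular M r ∧
      ∀ m : M, s • m ∈ r • (⊤ : Submodule S M) → m ∈ r • (⊤ : Submodule S M) := by
  rw [isWeaklyRegular_cons_iff, isWeaklyRegular_singleton_iff,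
    isSMulRegular_quotient_iff_mem_of_smul_mem]

theorem isWeaklyRegular_torsionBySet_pair (h : IsWeaklyRegular M [r, s]) (t : Set S) :
    IsWeaklyRegular (Submodule.torsionBySet S M t) [r, s] := by
  rw [isWeaklyRegular_pair_iff] at h ⊢
  obtain ⟨hr, hs⟩ := h
  refine ⟨hr.submodule _ _, fun w hw ↦ ?_⟩
  obtain ⟨v, -, hv⟩ := (Submodule.mem_smul_pointwise_iff_exists _ _ _).mp hw
  obtain ⟨m, -, hm⟩ := (Submodule.mem_smul_pointwise_iff_exists _ _ _).mp <|
    hs w ((Submodule.mem_smul_pointwise_iff_exists _ _ _).mpr ⟨v, trivial, congrArg Subtype.val hv⟩)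
  have hmt : m ∈ Submodule.torsionBySet S M t := (Submodule.mem_torsionBySet_iff _ _).mpr
    fun x ↦ hr <| by
      change r • x.1 • m = r • 0
      rw [smul_comm, hm, smul_zero]
      exact (Submodule.mem_torsionBySet_iff _ _).mp w.2 x
  exact (Submodule.mem_smul_pointwise_iff_exists _ _ _).mpr ⟨⟨m, hmt⟩, trivial, Subtype.ext hm⟩

theorem isWeaklyRegular_pow_pair [IsLocalRing S] [IsNoetherian S M] (h : IsWeaklyRegular M [r, s])
    (hr : r ∈ maximalIdeal S) (hs : s ∈ maximalIdeal S) (m n : ℕ) :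
    IsWeaklyRegular M [r ^ (m + 1), s ^ (n + 1)] := by
  have pow_left {x y : S} (hxy : IsWeaklyRegular M [x, y]) (k : ℕ) :
      IsWeaklyRegular M [x, y ^ k] := by
    rw [isWeaklyRegular_cons_iff, isWeaklyRegular_singleton_iff] at hxy ⊢
    exact ⟨hxy.1, hxy.2.pow k⟩
  have swap {x y : S} (hxy : IsWeaklyRegular M [x, y]) (hx : x ∈ maximalIdeal S)
      (hy : y ∈ maximalIdeal S) : IsWeaklyRegular M [y, x] :=
    isWeaklyRegular_of_perm_of_subset_maximalIdeal hxy (List.Perm.swap _ _ _)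
      (by simpa using ⟨hx, hy⟩)
  exact pow_left (swap (pow_left (swap h hr hs) (m + 1)) hs
    (Ideal.pow_mem_of_mem _ hr _ m.succ_pos)) (n + 1)

theorem exists_smul_end_eq_algebraMap_of_isWeaklyRegular (h : IsWeaklyRegular M [r, s]) {c d : S}
    (hcd : s * c - r * d ∈ Module.annihilator S M) :
    ∃ φ : Module.End S M, r • φ = algebraMap S _ c := by
  obtain ⟨hr, hs⟩ := isWeaklyRegular_pair_iff.mp h
  have hdiv (w : M) : ∃ v : M, r • v = c • w := by
    have hw : s • c • w = r • d • w := by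
      simpa only [sub_smul, mul_smul, sub_eq_zero] using Module.mem_annihilator.mp hcd w
    obtain ⟨v, -, hv⟩ := (Submodule.mem_smul_pointwise_iff_exists _ _ _).mp <|
      hs (c • w) (hw ▸ Submodule.smul_mem_pointwise_smul _ _ _ trivial)
    exact ⟨v, hv⟩
  choose φ hφ using hdiv
  refine ⟨⟨⟨φ, fun v w ↦ hr ?_⟩, fun x w ↦ hr ?_⟩, LinearMap.ext hφ⟩
  · simp only [smul_add, hφ]
  · simp only [RingHom.id_apply, smul_comm r x, hφ, smul_comm c x]

end RegularPair

section Integrality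

open IsLocalRing Polynomial

section FaithfulModule

variable {S M : Type*} [CommRing S] [AddCommGroup M] [Module S M] [Module.Finite S M] {r s : S}

theorem exists_monic_eval_scaleRoots_mem_annihilator {φ : Module.End S M} {c : S}
    (hφ : r • φ = algebraMap S _ c) :
    ∃ g : S[X], g.Monic ∧ (g.scaleRoots r).eval c ∈ Module.annihilator S M := by
  obtain ⟨g, hmonic, hg⟩ := LinearMap.exists_monic_and_aeval_eq_zero S φ
  have hzero := scaleRoots_aeval_eq_zero (r := r) hg
  rw [← Algebra.smul_def, hφ, aeval_algebraMap_apply, coe_aeval_eq_eval] at hzero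
  exact ⟨g, hmonic, Module.mem_annihilator.mpr fun w ↦ LinearMap.congr_fun hzero w⟩

theorem isIntegral_of_isWeaklyRegular_pair {B : Type*} [CommRing B] [IsDomain B]
    [Algebra S B] (hM : Module.annihilator S M = RingHom.ker (algebraMap S B))
    (h : IsWeaklyRegular M [r, s]) {y : B} (hr : r • y ∈ Set.range (algebraMap S B))
    (hs : s • y ∈ Set.range (algebraMap S B)) : IsIntegral S y := by
  obtain ⟨c, hc⟩ := hr
  obtain ⟨d, hd⟩ := hs
  rw [Algebra.smul_def] at hc hd
  have hcd : s * c - r * d ∈ Module.annihilator S M := by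
    rw [hM, RingHom.mem_ker, map_sub, map_mul, map_mul, hc, hd]
    ring
  -- `φ` plays the role of multiplication by `y`, since `r • y` is the image of `c`.
  obtain ⟨φ, hφ⟩ := exists_smul_end_eq_algebraMap_of_isWeaklyRegular h hcd
  obtain ⟨g, hmonic, hg⟩ := exists_monic_eval_scaleRoots_mem_annihilator hφ
  have hr : algebraMap S B r ≠ 0 := fun h0 ↦ one_ne_zero (α := B) <| by
    rw [← RingHom.mem_ker, ← hM, Module.mem_annihilator] at h0
    rw [← map_one (algebraMap S B), ← RingHom.mem_ker, ← hM, Module.mem_annihilator]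
    exact fun w ↦ (isWeaklyRegular_pair_iff.mp h).1 (by simp only [h0])
  refine ⟨g, hmonic, (mul_eq_zero.mp ?_).resolve_left (pow_ne_zero g.natDegree hr)⟩
  rw [← scaleRoots_eval₂_mul, ← hc, eval₂_at_apply]
  rwa [hM, RingHom.mem_ker] at hg

end FaithfulModule

theorem IsCohenMacaulayModule.isIntegral_of_forall_smul_mem_range {S : Type u} [CommRing S]
    [IsNoetherianRing S] [IsLocalRing S] {M : Type v} [AddCommGroup M] [Module S M]
    [Module.Finite S M] [Small.{v} S] (h : IsCohenMacaulayModule S M) {B : Type*} [CommRing B]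
    [IsDomain B] [Algebra S B] (hM : Module.annihilator S M ≤ RingHom.ker (algebraMap S B))
    (hdim : 2 ≤ ringKrullDim (S ⧸ RingHom.ker (algebraMap S B))) {I : Ideal S}
    (hI : maximalIdeal S ≤ I.radical) {y : B}
    (hy : ∀ s ∈ I, s • y ∈ Set.range (algebraMap S B)) : IsIntegral S y := by
  let p : PrimeSpectrum S := ⟨RingHom.ker (algebraMap S B), RingHom.ker_isPrime _⟩
  obtain ⟨N, _, _, _, ⟨rs, hrs, hlen⟩, hp⟩ :=
    h.exists_mem_associatedPrimes (p := p) (Module.mem_support_iff_of_finite.mpr hM)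
  have htwo : 2 ≤ rs.length := by
    have := hdim.trans (ringKrullDim_quotient_le_supportDim
      (Submodule.annihilator_top.symm.trans_le
        (IsAssociatedPrime.annihilator_le (AssociatedPrimes.mem_iff.mp hp))))
    rw [← hlen] at this
    exact_mod_cast this
  obtain _ | ⟨r, _ | ⟨s, rs⟩⟩ := rs
  iterate 2 exact absurd htwo (by simp)
  have hr : r ∈ maximalIdeal S := mem_maximalIdeal_of_isRegular hrs (by simp)
  have hs : s ∈ maximalIdeal S := mem_maximalIdeal_of_isRegular hrs (by simp)
  obtain ⟨m, hrm⟩ := hI hr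
  obtain ⟨n, hsn⟩ := hI hs
  have hN : IsWeaklyRegular N [r, s] :=
    ((isWeaklyRegular_append_iff N [r, s] rs).mp hrs.toIsWeaklyRegular).1
  exact isIntegral_of_isWeaklyRegular_pair (annihilator_torsionBySet_of_mem_associatedPrimes hp)
    (isWeaklyRegular_torsionBySet_pair (isWeaklyRegular_pow_pair hN hr hs m n) _)
    (hy _ (I.pow_mem_of_pow_mem hrm m.le_succ)) (hy _ (I.pow_mem_of_pow_mem hsn n.le_succ))

theorem isIntegral_of_forall_minimalPrimes_s18 {R A : Type*} [CommRing R] [CommRing A] [Algebra R A]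
    [IsNoetherianRing A] {x : A}
    (hx : ∀ q ∈ minimalPrimes A, IsIntegral R (Ideal.Quotient.mk q x)) : IsIntegral R x := by
  have hmonic : ∀ q : minimalPrimes A, ∃ g : R[X], g.Monic ∧ aeval x g ∈ (q : Ideal A) :=
    fun ⟨q, hq⟩ ↦ by
      obtain ⟨g, hg, hgx⟩ := hx q hq
      refine ⟨g, hg, ?_⟩
      rw [← Ideal.Quotient.eq_zero_iff_mem, ← Ideal.Quotient.mkₐ_eq_mk R, ← aeval_algHom_apply]
      exact hgx
  choose g hg hgx using hmonic
  have := (minimalPrimes.finite_of_isNoetherianRing A).fintype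
  obtain ⟨n, hn⟩ : IsNilpotent (aeval x (∏ q, g q)) := by
    rw [← mem_nilradical, nilradical, ← Ideal.sInf_minimalPrimes, Submodule.mem_sInf]
    intro q hq
    rw [map_prod]
    exact Ideal.mem_of_dvd _ (Finset.dvd_prod_of_mem _ (Finset.mem_univ ⟨q, hq⟩)) (hgx ⟨q, hq⟩)
  exact ⟨(∏ q, g q) ^ n, (monic_prod_of_monic _ _ fun q _ ↦ hg q).pow n,
    by rw [← aeval_def, map_pow, hn]⟩

theorem ker_algebraMap_quotient_mem_minimalPrimes {R A : Type*} [CommRing R] [CommRing A]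
    [Algebra R A] (T : Submonoid R) [IsLocalization T A] {q : Ideal A} (hq : q ∈ minimalPrimes A) :
    RingHom.ker (algebraMap R (A ⧸ q)) ∈ minimalPrimes R := by
  have hker : RingHom.ker (algebraMap R (A ⧸ q)) = q.under R := by
    rw [IsScalarTower.algebraMap_eq R A, ← RingHom.comap_ker, Ideal.Quotient.algebraMap_eq,
      Ideal.mk_ker]
  have hmap := IsLocalization.minimalPrimes_map T A (⊥ : Ideal R)
  rw [Ideal.map_bot] at hmap
  exact hker ▸ hmap.le hq

theorem maximalIdeal_le_radical_comap_of_surjective {S R : Type*} [CommRing S] [IsLocalRing S]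
    [CommRing R] [IsLocalRing R] {f : S →+* R} (hf : Function.Surjective f) {I : Ideal R}
    (hI : maximalIdeal R ≤ I.radical) : maximalIdeal S ≤ (I.comap f).radical := by
  have := hf.isLocalHom
  rw [← Ideal.comap_radical, ← maximalIdeal_comap f]
  exact Ideal.comap_mono hI

theorem IsCohenMacaulayModule.isIntegral_fractionRing_of_forall_smul_mem_range {S : Type u}
    [CommRing S] [IsNoetherianRing S] [IsLocalRing S] (hS : IsCohenMacaulayModule S S)
    {R K : Type*} [CommRing R] [IsNoetherianRing R] [IsLocalRing R] [Algebra S R]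
    (hsurj : Function.Surjective (algebraMap S R))
    (hdim : ∀ p ∈ minimalPrimes R, 2 ≤ ringKrullDim (R ⧸ p)) [CommRing K] [Algebra R K]
    [IsFractionRing R K] {I : Ideal R} (hI : maximalIdeal R ≤ I.radical) {f : K}
    (hf : ∀ i ∈ I, i • f ∈ Set.range (algebraMap R K)) : IsIntegral R f := by
  have := IsLocalization.isNoetherianRing (nonZeroDivisors R) K inferInstance
  refine isIntegral_of_forall_minimalPrimes_s18 fun q hq ↦ ?_
  have := hq.1.1
  let _ : Algebra S (K ⧸ q) := ((algebraMap R (K ⧸ q)).comp (algebraMap S R)).toAlgebra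
  have : IsScalarTower S R (K ⧸ q) := .of_algebraMap_eq' rfl
  have hp := ker_algebraMap_quotient_mem_minimalPrimes (R := R) (nonZeroDivisors R) hq
  refine (hS.isIntegral_of_forall_smul_mem_range (B := K ⧸ q) ?_ ?_
    (maximalIdeal_le_radical_comap_of_surjective hsurj hI) fun s hs ↦ ?_).tower_top
  · rw [Module.annihilator_eq_bot.mpr inferInstance]
    exact bot_le
  · exact (hdim _ hp).trans (ringKrullDim_le_of_surjective
      (Ideal.quotientMap _ (algebraMap S R) (RingHom.comap_ker _ _).ge)
      (Ideal.quotientMap_surjective hsurj))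
  · obtain ⟨r, hr⟩ := hf _ hs
    obtain ⟨t, rfl⟩ := hsurj r
    refine ⟨t, ?_⟩
    change Ideal.Quotient.mk q (algebraMap R K (algebraMap S R t)) = _
    rw [hr, Algebra.smul_def, map_mul, Algebra.smul_def]
    rfl

end Integrality

section Colon

open IsLocalRing

variable {R : Type*} [CommRing R]

theorem mul_mem_of_mul_pow_mem_of_colon_eq {I : Ideal R} {b : R}
    (hcolon : I.colon (Ideal.span {b}) = I.colon (Ideal.span {b ^ 2})) {x : R} {n : ℕ}
    (hx : x * b ^ n ∈ I) : x * b ∈ I := by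
  induction n with
  | zero => exact I.mul_mem_right b (by simpa only [pow_zero, mul_one] using hx)
  | succ n ih =>
    cases n with
    | zero => simpa only [zero_add, pow_one] using hx
    | succ n =>
      refine ih ?_
      have : x * b ^ n ∈ I.colon (Ideal.span {b}) := by
        rw [hcolon, Ideal.mem_colon_span_singleton, mul_assoc, ← pow_add]
        exact hx
      rwa [Ideal.mem_colon_span_singleton, mul_assoc, ← pow_succ] at this

theorem two_le_height_colon_iff_forall_minimalPrimes [IsNoetherianRing R] {a x : R}
    (ha : a ∈ nonZeroDivisors R) :
    2 ≤ ((Ideal.span {a}).colon (Ideal.span {x})).height ↔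
      ∀ p ∈ (Ideal.span {a}).minimalPrimes, p.height = 1 → ∃ s ∉ p, s * x ∈ Ideal.span {a} := by
  constructor
  · intro h p _ hp1
    by_contra! hs
    refine absurd (h.trans (Ideal.height_mono fun s hsx ↦ ?_)) (by rw [hp1]; decide)
    by_contra hsp
    exact hs s hsp (Ideal.mem_colon_span_singleton.mp hsx)
  · intro h
    rw [Ideal.height_eq_inf_minimalPrimes]
    refine le_iInf₂ fun q hq ↦ ?_
    have := hq.1.1
    obtain ⟨p, hp, hpq⟩ := Ideal.exists_minimalPrimes_le
      ((Ideal.le_colon (I := Ideal.span {a})).trans hq.1.2)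
    have := hp.1.1
    have hp1 : p.height = 1 :=
      (Ideal.height_le_one_of_isPrincipal_of_mem_minimalPrimes _ p hp).antisymm
        ((Ideal.one_le_height_span_singleton_of_mem_nonZeroDivisors ha).trans
          (Ideal.height_mono hp.1.2))
    obtain ⟨s, hsp, hsx⟩ := h p hp hp1
    have hlt : p < q := SetLike.lt_iff_le_and_exists.mpr
      ⟨hpq, s, hq.1.2 (Ideal.mem_colon_span_singleton.mpr hsx), hsp⟩
    have hpq1 := Ideal.height_add_one_le_of_lt_of_isPrime hlt
    rwa [hp1, one_add_one_eq_two] at hpq1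

theorem ringKrullDim_le_height_colon_iff [IsNoetherianRing R] [IsLocalRing R] {I : Ideal R}
    {b x : R}
    (hrad : (I ⊔ Ideal.span {b}).radical = maximalIdeal R)
    (hcolon : I.colon (Ideal.span {b}) = I.colon (Ideal.span {b ^ 2})) :
    ringKrullDim R ≤ (I.colon (Ideal.span {x})).height ↔ x ∈ I.colon (Ideal.span {b}) := by
  rw [ringKrullDim_le_height_iff_maximalIdeal_le_radical, Ideal.mem_colon_span_singleton]
  constructor
  · intro h
    have hb : b ∈ maximalIdeal R :=
      hrad ▸ Ideal.le_radical (Ideal.mem_sup_right (Ideal.mem_span_singleton_self b))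
    obtain ⟨n, hn⟩ := h hb
    rw [Ideal.mem_colon_span_singleton, mul_comm] at hn
    exact mul_mem_of_mul_pow_mem_of_colon_eq hcolon hn
  · intro h
    rw [← hrad]
    refine Ideal.radical_mono (sup_le Ideal.le_colon ?_)
    rwa [Ideal.span_singleton_le_iff_mem, Ideal.mem_colon_span_singleton, mul_comm]

variable {K : Type*} [CommRing K] [Algebra R K] [IsFractionRing R K]

theorem smul_mem_range_algebraMap_iff_mul_mem_span {a x : R} {f : K} (ha : a ∈ nonZeroDivisors R)
    (hf : algebraMap R K x = a • f) {r : R} :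
    r • f ∈ Set.range (algebraMap R K) ↔ r * x ∈ Ideal.span {a} := by
  have hreg (y z : K) : a • y = a • z ↔ y = z := by
    rw [Algebra.smul_def, Algebra.smul_def]
    exact (IsLocalization.map_units K ⟨a, ha⟩).mul_right_inj
  rw [Ideal.mem_span_singleton', Set.mem_range]
  refine exists_congr fun y ↦ ?_
  rw [← hreg, smul_comm, ← hf, ← (IsFractionRing.injective R K).eq_iff, map_mul, map_mul,
    Algebra.smul_def, Algebra.smul_def, mul_comm]

theorem exists_le_height_forall_smul_mem_range_iff {a x : R} {f : K} (ha : a ∈ nonZeroDivisors R)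
    (hf : algebraMap R K x = a • f) {n : ℕ∞} :
    (∃ I : Ideal R, n ≤ I.height ∧ ∀ i ∈ I, i • f ∈ Set.range (algebraMap R K)) ↔
      n ≤ ((Ideal.span {a}).colon (Ideal.span {x})).height := by
  simp only [smul_mem_range_algebraMap_iff_mul_mem_span ha hf, ← Ideal.mem_colon_span_singleton]
  exact ⟨fun ⟨_, hn, hI⟩ ↦ hn.trans (Ideal.height_mono hI), fun hn ↦ ⟨_, hn, fun _ ↦ id⟩⟩

end Colon

theorem stmt18_general {S : Type u} [CommRing S] [IsNoetherianRing S] [IsLocalRing S]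
    (hS : IsCohenMacaulayModule S S) {R K : Type*} [CommRing R] [IsNoetherianRing R]
    [IsLocalRing R] [Algebra S R] (hsurj : Function.Surjective (algebraMap S R)) [CommRing K]
    [Algebra R K] [IsFractionRing R K] (hdim : ringKrullDim R = 2)
    (hunmixed : ∀ p ∈ minimalPrimes R, ∀ q ∈ minimalPrimes R,
      ringKrullDim (R ⧸ p) = ringKrullDim (R ⧸ q))
    {a b : R} (ha : a ∈ nonZeroDivisors R)
    (hcond : ∀ u : K, IsIntegral R u → ∃ r : R, a • u = algebraMap R K r)
    (hsop : (Ideal.span {a, b}).radical = IsLocalRing.maximalIdeal R)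
    (hcolon : (Ideal.span {a}).colon (Ideal.span {b}) =
      (Ideal.span {a}).colon (Ideal.span {b ^ 2})) :
    (⋂ p ∈ {p : Ideal R | p ∈ (Ideal.span {a}).minimalPrimes ∧ idealHt p = 1},
        {x : R | ∃ s, s ∉ p ∧ s * x ∈ Ideal.span {a}}) =
      ↑((Ideal.span {a}).colon (Ideal.span {b})) ∧
    {f : K | ∃ I : Ideal R, 2 ≤ idealHt I ∧
        ∀ i ∈ I, i • f ∈ Set.range (algebraMap R K)} =
      {f | a • f ∈ Set.range (algebraMap R K)} ∩
        {f | b • f ∈ Set.range (algebraMap R K)} := by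
  have two_le_height_iff (I : Ideal R) : 2 ≤ I.height ↔ ringKrullDim R ≤ I.height := by
    rw [hdim]
    exact WithBot.coe_le_coe.symm
  have hU (x : R) : 2 ≤ ((Ideal.span {a}).colon (Ideal.span {x})).height ↔
      x ∈ (Ideal.span {a}).colon (Ideal.span {b}) := by
    rw [Ideal.span_insert] at hsop
    rw [two_le_height_iff, ringKrullDim_le_height_colon_iff hsop hcolon]
  simp only [idealHt_eq_height]
  refine ⟨Set.ext fun x ↦ ?_, Set.ext fun f ↦ ?_⟩
  · rw [SetLike.mem_coe, ← hU, two_le_height_colon_iff_forall_minimalPrimes ha]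
    simp only [Set.mem_iInter, Set.mem_ofPred_eq, and_imp]
  · have hR {x : R} (hx : algebraMap R K x = a • f) :
        (∃ I : Ideal R, 2 ≤ I.height ∧ ∀ i ∈ I, i • f ∈ Set.range (algebraMap R K)) ↔
          b • f ∈ Set.range (algebraMap R K) := by
      rw [exists_le_height_forall_smul_mem_range_iff ha hx, hU, Ideal.mem_colon_span_singleton,
        mul_comm, smul_mem_range_algebraMap_iff_mul_mem_span ha hx]
    refine ⟨fun hf ↦ ?_, fun ⟨⟨_, hx⟩, hbf⟩ ↦ (hR hx).mpr hbf⟩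
    obtain ⟨I, hI, hIf⟩ := id hf
    rw [two_le_height_iff, ringKrullDim_le_height_iff_maximalIdeal_le_radical] at hI
    obtain ⟨x, hx⟩ := hcond f <| hS.isIntegral_fractionRing_of_forall_smul_mem_range hsurj
      (fun p hp ↦ hdim.ge.trans_eq
        (ringKrullDim_quotient_eq_of_mem_minimalPrimes hunmixed hp).symm) hI hIf
    exact ⟨⟨x, hx.symm⟩, (hR hx.symm).mp hf⟩

/-- let `(R,𝔪)` be a 2-dimensional Noetherian local ring whose
minimal primes all have the same codimension, possessing a canonical module
(equivalently, in the convention of the paper, being a homomorphic image of a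
Gorenstein local ring), and whose integral closure `R̄` in `Q(R)` is a finite
`R`-module. For non-zerodivisors `a, b ∈ 𝔪` with `a ∈ R : R̄`, `a, b` a system
of parameters, and `aR :_R b = aR :_R b²`, one has `U(aR) = aR :_R b` and hence
`R̃ = R/a ∩ R/b` inside `Q(R)`. -/
theorem stmt18 {R : Type u} [CommRing R] [IsNoetherianRing R] [IsLocalRing R]
    (hdim : ringKrullDim R = 2)
    (hunmixed : ∀ p ∈ minimalPrimes R, ∀ q ∈ minimalPrimes R,
      ringKrullDim (R ⧸ p) = ringKrullDim (R ⧸ q))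
    (hcan : ∃ (S : Type u) (_ : CommRing S), GorensteinLocalRing S ∧
      ∃ f : S →+* R, Function.Surjective f)
    (hbar : ((integralClosure R (FractionRing R)).toSubmodule :
      Submodule R (FractionRing R)).FG)
    (a b : R)
    (ha : a ∈ nonZeroDivisors R) (hb : b ∈ nonZeroDivisors R)
    (ham : a ∈ IsLocalRing.maximalIdeal R) (hbm : b ∈ IsLocalRing.maximalIdeal R)
    (hcond : ∀ u : FractionRing R, IsIntegral R u →
      ∃ r : R, a • u = algebraMap R (FractionRing R) r)
    (hsop : (Ideal.span {a, b}).radical = IsLocalRing.maximalIdeal R)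
    (hcolon : (Ideal.span {a}).colon (Ideal.span {b}) =
      (Ideal.span {a}).colon (Ideal.span {b ^ 2})) :
    (⋂ p ∈ {p : Ideal R | p ∈ (Ideal.span {a}).minimalPrimes ∧ idealHt p = 1},
        {x : R | ∃ s, s ∉ p ∧ s * x ∈ Ideal.span {a}}) =
      ↑((Ideal.span {a}).colon (Ideal.span {b})) ∧
    {f : FractionRing R | ∃ I : Ideal R, 2 ≤ idealHt I ∧
        ∀ i ∈ I, i • f ∈ Set.range (algebraMap R (FractionRing R))} =
      {f | a • f ∈ Set.range (algebraMap R (FractionRing R))} ∩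
        {f | b • f ∈ Set.range (algebraMap R (FractionRing R))} := by
  obtain ⟨S, _, hS, φ, hφ⟩ := hcan
  have := hS.1
  have := hS.2.1
  let _ := φ.toAlgebra
  exact stmt18_general hS.isCohenMacaulayModule hφ hdim hunmixed ha hcond hsop hcolon
end
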